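/- Let η = (η₁, η₂) ∈ ℝ² with η ≠ 0, write r = |η|, and let γ ∈ ℝ. Suppose u : ℝ → ℂ³ and p : ℝ → ℂ are infinitely differentiable and satisfy, for all t > 0: uⱼ''''(t) − 2r² uⱼ''(t) + r⁴ uⱼ(t) + i ηⱼ p(t) = 0 for j = 1,2; u₃''''(t) − 2r² u₃''(t) + r⁴ u₃(t) + p'(t) = 0; and u₃'(t) + i η₁ u₁(t) + i η₂ u₂(t) = 0. Suppose further that the boundary conditions hold: u₁(0) = u₂(0) = u₃(0) = 0, u₂''(0) − i η₂ u₃'(0) + γ η₁ (η₂ u₁(0) − η₁ u₂(0)) = 0, and u₁''(0) − i η₁ u₃'(0) + γ η₂ (η₂ u₁(0) − η₁ u₂(0)) = 0. If in addition u(t) → 0 and p(t) → 0 as t → +∞, then u(t) = 0 and p(t) = 0 for all t ≥ 0. -/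

import Mathlib

open Filter

/-!
Write `D = d/dt` and `L = D² - r²`, and identify smooth functions that agree on `[0, ∞)`.
The divergence of the momentum equations gives `L p = 0`, hence `L³ u₃ = -D L p = 0`.

Since `(X - r)ⁿ` and `(X + r)ⁿ` are coprime, every solution of `Lⁿ f = 0` is a sum `f₁ + f₂` with
`(D + r)ⁿ f₁ = 0` and `(D - r)ⁿ f₂ = 0`. Both summands are exponential polynomials, so
`f = o(e^{rt})` forces `f₂ = 0`, that is, `(D + r)ⁿ f = 0`. Evaluated at `0`, this equation
supplies the initial value that the boundary conditions leave open: `u₃''(0)` for `f = u₃` and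
`n = 3`, where the divergence equation gives `u₃'(0) = u₃'''(0) = 0`, and `uⱼ'(0)` for `f = uⱼ`
and `n = 2`. Uniqueness for the initial value problem then gives `u₃ = 0`, so that `D p = 0` and
`r² p = D² p - L p = 0`; this leaves `L² uⱼ = 0`, and `uⱼ = 0` follows in the same way.
-/

noncomputable section

open Asymptotics Polynomial

theorem exists_derivative_eq_eval_zero_eq {K : Type*} [Field K] [CharZero K] (P : K[X]) (c : K) :
    ∃ Q : K[X], derivative Q = P ∧ Q.eval 0 = c := by
  have hsurj : ∃ Q : K[X], derivative Q = P := by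
    induction P using Polynomial.induction_on' with
    | add P₁ P₂ h₁ h₂ =>
      obtain ⟨Q₁, rfl⟩ := h₁
      obtain ⟨Q₂, rfl⟩ := h₂
      exact ⟨Q₁ + Q₂, derivative_add⟩
    | monomial n a =>
      have hn : (n : K) + 1 ≠ 0 := n.cast_add_one_ne_zero
      exact ⟨monomial (n + 1) (a / (n + 1)), by simp [hn]⟩
  obtain ⟨Q, rfl⟩ := hsurj
  exact ⟨Q - C (Q.eval 0) + C c, by simp, by simp⟩

theorem isLittleO_exp_const_mul_of_tendsto {E : Type*} [SeminormedAddCommGroup E] {f : ℝ → E}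
    {y : E} {c : ℝ} (hf : Tendsto f atTop (nhds y)) (hc : 0 < c) :
    f =o[atTop] fun t => Real.exp (c * t) := by
  have hexp : Tendsto (fun t => Real.exp (c * t)) atTop atTop :=
    Real.tendsto_exp_atTop.comp (tendsto_id.const_mul_atTop hc)
  exact (hf.isBigO_one ℝ).trans_isLittleO
    ((isLittleO_const_left_of_ne one_ne_zero).2 (tendsto_norm_atTop_atTop.comp hexp))

/-- The complex vector space of smooth functions `ℝ → ℂ`. -/
def SmoothFunction : Submodule ℂ (ℝ → ℂ) where
  carrier := {f | ContDiff ℝ (⊤ : ℕ∞) f}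
  add_mem' hf hg := hf.out.add hg.out
  zero_mem' := contDiff_zero_fun (𝕜 := ℝ) (n := (⊤ : ℕ∞))
  smul_mem' c _ hf := hf.out.const_smul c

namespace SmoothFunction

instance : CoeFun SmoothFunction fun _ => ℝ → ℂ := ⟨Subtype.val⟩

theorem differentiable (f : SmoothFunction) : Differentiable ℝ f :=
  (contDiff_infty_iff_deriv.1 f.2.out).1

/-- Differentiation, as an endomorphism of the space of smooth functions. -/
def differentiation : Module.End ℂ SmoothFunction where
  toFun f := ⟨deriv f, (contDiff_infty_iff_deriv.1 f.2.out).2⟩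
  map_add' f g := Subtype.ext <| funext fun t => deriv_add (differentiable f t) (differentiable g t)
  map_smul' c f := Subtype.ext <| funext fun t => deriv_const_smul c (differentiable f t)

/-- The constant-coefficient differential operator `q(d/dt)`. -/
def diffOp : ℂ[X] →ₐ[ℂ] Module.End ℂ SmoothFunction := aeval differentiation

theorem coe_diffOp_X (f : SmoothFunction) : (diffOp X f : ℝ → ℂ) = deriv f := by
  simp [diffOp, differentiation]

theorem diffOp_C_apply (c : ℂ) (f : SmoothFunction) : diffOp (C c) f = c • f := by
  simp [diffOp]

theorem diffOp_mul_apply (q s : ℂ[X]) (f : SmoothFunction) :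
    diffOp (q * s) f = diffOp q (diffOp s f) := by
  rw [map_mul, Module.End.mul_apply]

theorem coe_diffOp_X_pow (n : ℕ) (f : SmoothFunction) :
    (diffOp (X ^ n) f : ℝ → ℂ) = iteratedDeriv n f := by
  induction n with
  | zero => simp
  | succ n ih => rw [pow_succ', diffOp_mul_apply, coe_diffOp_X, ih, iteratedDeriv_succ]

theorem diffOp_X_sub_C_apply (k : ℂ) (f : SmoothFunction) (t : ℝ) :
    diffOp (X - C k) f t = deriv f t - k * f t := by
  simp [← coe_diffOp_X, diffOp_C_apply]

/-- The smooth functions that vanish on `[0, ∞)`; a differential equation on the half-line is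
membership in this submodule. -/
def vanishing : Submodule ℂ SmoothFunction where
  carrier := {f | ∀ t : ℝ, 0 ≤ t → f t = 0}
  add_mem' hf hg t ht := by simp [hf t ht, hg t ht]
  zero_mem' _ _ := rfl
  smul_mem' c _ hf t ht := by simp [hf t ht]

theorem mem_vanishing_of_pos {f : SmoothFunction} (hf : ∀ t : ℝ, 0 < t → f t = 0) :
    f ∈ vanishing := by
  have hclosure : Set.EqOn f 0 (closure (Set.Ioi 0)) :=
    Set.EqOn.closure hf (differentiable f).continuous continuous_zero
  rwa [closure_Ioi] at hclosure

theorem diffOp_mem_vanishing (q : ℂ[X]) {f : SmoothFunction} (hf : f ∈ vanishing) :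
    diffOp q f ∈ vanishing := by
  induction q using Polynomial.induction_on' with
  | add q s hq hs => simpa using add_mem hq hs
  | monomial n c =>
    have hpow : diffOp (X ^ n) f ∈ vanishing := mem_vanishing_of_pos fun t ht => by
      have hzero : f =ᶠ[nhds t] 0 := by
        filter_upwards [lt_mem_nhds ht] with s hs using hf s hs.le
      rw [coe_diffOp_X_pow, hzero.iteratedDeriv_eq]
      simp
    rw [← C_mul_X_pow_eq_monomial, diffOp_mul_apply, diffOp_C_apply]
    exact vanishing.smul_mem c hpow

theorem mem_vanishing_of_diffOp_X_sub_C_mem {k : ℂ} {f : SmoothFunction}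
    (hf : diffOp (X - C k) f ∈ vanishing) (h0 : f 0 = 0) : f ∈ vanishing := by
  intro t ht
  have hderiv (s : ℝ) : HasDerivAt (fun s : ℝ => Complex.exp (-k * s) * f s)
      (Complex.exp (-k * s) * diffOp (X - C k) f s) s := by
    have hexp := ((hasDerivAt_id (s : ℂ)).const_mul (-k)).cexp.comp_ofReal
    refine (hexp.mul (differentiable f s).hasDerivAt).congr_deriv ?_
    simp only [diffOp_X_sub_C_apply, id_eq]
    ring
  have hconst : Complex.exp (-k * t) * f t = Complex.exp (-k * (0 : ℝ)) * f 0 :=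
    constant_of_has_deriv_right_zero (fun s _ => (hderiv s).continuousAt.continuousWithinAt)
      (fun s hs => by simpa only [hf s hs.1, mul_zero] using (hderiv s).hasDerivWithinAt)
      t (Set.right_mem_Icc.2 ht)
  simpa [h0] using hconst

theorem mem_vanishing_of_diffOp_mem {q : ℂ[X]} (hq : q ≠ 0) {f : SmoothFunction}
    (hf : diffOp q f ∈ vanishing) (h0 : ∀ j < q.natDegree, diffOp (X ^ j) f 0 = 0) :
    f ∈ vanishing := by
  induction hn : q.natDegree generalizing q f with
  | zero =>
    obtain ⟨c, rfl⟩ := natDegree_eq_zero.1 hn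
    rw [diffOp_C_apply] at hf
    exact (vanishing.smul_mem_iff (by simpa using hq)).1 hf
  | succ n ih =>
    obtain ⟨k, hk⟩ := IsAlgClosed.exists_root q
      (by rw [degree_eq_natDegree hq, hn]; exact mod_cast n.succ_ne_zero)
    obtain ⟨s, rfl⟩ := dvd_iff_isRoot.2 hk
    have hs : s ≠ 0 := right_ne_zero_of_mul hq
    have hsn : s.natDegree = n := by
      rw [natDegree_mul (X_sub_C_ne_zero k) hs, natDegree_X_sub_C] at hn
      omega
    rw [hn] at h0
    refine mem_vanishing_of_diffOp_X_sub_C_mem (k := k) (ih hs ?_ ?_ hsn) (by simpa using h0 0)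
    · rwa [← diffOp_mul_apply, mul_comm]
    · intro j hj
      have hcomm : diffOp (X ^ j) (diffOp (X - C k) f)
          = diffOp (X ^ (j + 1)) f - k • diffOp (X ^ j) f := by
        rw [← diffOp_mul_apply, mul_sub, ← pow_succ, mul_comm _ (C k), map_sub,
          LinearMap.sub_apply, diffOp_mul_apply (C k), diffOp_C_apply]
      rw [hcomm]
      simp only [Submodule.coe_sub, Submodule.coe_smul, Pi.sub_apply, Pi.smul_apply,
        h0 j (by omega), h0 (j + 1) (by omega), smul_zero, sub_zero]

/-- The exponential polynomial `t ↦ P(t) * exp (k * t)`. -/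
def expPoly (k : ℂ) (P : ℂ[X]) : SmoothFunction :=
  ⟨fun t => P.eval (t : ℂ) * Complex.exp (k * t), by
    have hpoly : ContDiff ℂ (⊤ : ℕ∞) fun z : ℂ => P.eval z := by
      simpa using P.contDiff_aeval (𝕜 := ℂ) _
    have hentire : ContDiff ℂ (⊤ : ℕ∞) fun z : ℂ => P.eval z * Complex.exp (k * z) := by fun_prop
    exact (hentire.restrict_scalars ℝ).comp Complex.ofRealCLM.contDiff⟩

theorem expPoly_apply (k : ℂ) (P : ℂ[X]) (t : ℝ) :
    expPoly k P t = P.eval (t : ℂ) * Complex.exp (k * t) := rfl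

theorem expPoly_zero (k : ℂ) : expPoly k 0 = 0 :=
  Subtype.ext <| funext fun t => by simp [expPoly_apply]

theorem diffOp_X_sub_C_expPoly (k : ℂ) (P : ℂ[X]) :
    diffOp (X - C k) (expPoly k P) = expPoly k (derivative P) := by
  refine Subtype.ext (funext fun t => ?_)
  have hexp := ((hasDerivAt_id (t : ℂ)).const_mul k).cexp
  have hderiv : HasDerivAt (expPoly k P) _ t := ((P.hasDerivAt (t : ℂ)).mul hexp).comp_ofReal
  rw [diffOp_X_sub_C_apply, hderiv.deriv, expPoly_apply, expPoly_apply, id_eq]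
  ring

theorem exists_sub_expPoly_mem_vanishing {k : ℂ} {n : ℕ} {f : SmoothFunction}
    (hf : diffOp ((X - C k) ^ n) f ∈ vanishing) : ∃ P, f - expPoly k P ∈ vanishing := by
  induction n generalizing f with
  | zero => exact ⟨0, by simpa [expPoly_zero] using hf⟩
  | succ n ih =>
    rw [pow_succ, diffOp_mul_apply] at hf
    obtain ⟨P, hP⟩ := ih hf
    obtain ⟨Q, rfl, hQ⟩ := exists_derivative_eq_eval_zero_eq P (f 0)
    rw [← diffOp_X_sub_C_expPoly, ← map_sub] at hP
    exact ⟨Q, mem_vanishing_of_diffOp_X_sub_C_mem hP (by simp [expPoly_apply, hQ])⟩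

theorem isLittleO_congr_of_sub_mem_vanishing {f g : SmoothFunction} (h : f - g ∈ vanishing)
    {φ : ℝ → ℝ} : (f =o[atTop] φ) ↔ (g =o[atTop] φ) := by
  refine isLittleO_congr ?_ .rfl
  filter_upwards [eventually_ge_atTop 0] with t ht using sub_eq_zero.1 (h t ht)

theorem norm_expPoly (k : ℂ) (P : ℂ[X]) (t : ℝ) :
    ‖expPoly k P t‖ = ‖P.eval (t : ℂ)‖ * Real.exp (k.re * t) := by
  simp [expPoly_apply, Complex.norm_exp]

theorem expPoly_isLittleO_exp {k : ℂ} {c : ℝ} (hk : k.re < c) (P : ℂ[X]) :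
    expPoly k P =o[atTop] fun t => Real.exp (c * t) := by
  have hpoly : (fun t : ℝ => P.eval (t : ℂ)) =o[atTop] fun t => Real.exp ((c - k.re) * t) := by
    induction P using Polynomial.induction_on' with
    | add P Q hP hQ => simpa using hP.add hQ
    | monomial n a =>
      have hpow : (fun t : ℝ => (t : ℂ) ^ n) =o[atTop] fun t => Real.exp ((c - k.re) * t) := by
        refine .of_norm_left ?_
        simpa using (isLittleO_pow_exp_pos_mul_atTop n (sub_pos.2 hk)).norm_left
      simpa using hpow.const_mul_left a
  refine .of_norm_left ?_
  simp_rw [norm_expPoly]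
  refine (hpoly.norm_left.mul_isBigO (isBigO_refl (fun t => Real.exp (k.re * t)) _)).congr_right ?_
  intro t
  rw [← Real.exp_add]
  ring_nf

theorem eq_zero_of_expPoly_isLittleO_exp {k : ℂ} {P : ℂ[X]}
    (h : expPoly k P =o[atTop] fun t => Real.exp (k.re * t)) : P = 0 := by
  have hlim : Tendsto (fun t : ℝ => ‖P.eval (t : ℂ)‖) atTop (nhds 0) := by
    refine h.norm_left.tendsto_div_nhds_zero.congr fun t => ?_
    rw [norm_expPoly, mul_div_cancel_right₀ _ (Real.exp_ne_zero _)]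
  have hdeg : P.degree ≤ 0 := by
    by_contra! hpos
    refine not_tendsto_nhds_of_tendsto_atTop (P.tendsto_norm_atTop hpos ?_) 0 hlim
    simpa using tendsto_abs_atTop_atTop
  rw [eq_C_of_degree_le_zero hdeg] at hlim ⊢
  simpa using hlim

theorem diffOp_mem_vanishing_of_isLittleO_exp {k l : ℂ} (hlk : l.re < k.re) {m n : ℕ}
    {f : SmoothFunction} (hf : diffOp ((X - C k) ^ m * (X - C l) ^ n) f ∈ vanishing)
    (hgrowth : f =o[atTop] fun t => Real.exp (k.re * t)) :
    diffOp ((X - C l) ^ n) f ∈ vanishing := by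
  have hkl : k - l ≠ 0 := sub_ne_zero.2 fun h => hlk.ne (h ▸ rfl)
  obtain ⟨a, b, hab⟩ : IsCoprime ((X - C k) ^ m) ((X - C l) ^ n) :=
    (isCoprime_X_sub_C_of_isUnit_sub hkl.isUnit).pow
  set g := diffOp (a * (X - C k) ^ m) f with hg
  set h := diffOp (b * (X - C l) ^ n) f with hh
  have hsum : g + h = f := by
    rw [hg, hh, ← LinearMap.add_apply, ← map_add, hab, map_one, Module.End.one_apply]
  have hg_op : diffOp ((X - C l) ^ n) g ∈ vanishing := by
    have := diffOp_mem_vanishing a hf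
    rwa [hg, ← diffOp_mul_apply, mul_left_comm, mul_comm ((X - C l) ^ n), diffOp_mul_apply]
  have hh_op : diffOp ((X - C k) ^ m) h ∈ vanishing := by
    have := diffOp_mem_vanishing b hf
    rwa [hh, ← diffOp_mul_apply, mul_left_comm, diffOp_mul_apply]
  obtain ⟨Q, hQ⟩ := exists_sub_expPoly_mem_vanishing hg_op
  obtain ⟨P, hP⟩ := exists_sub_expPoly_mem_vanishing hh_op
  have hg_growth := (isLittleO_congr_of_sub_mem_vanishing hQ).2 (expPoly_isLittleO_exp hlk Q)
  have hh_growth : h =o[atTop] fun t => Real.exp (k.re * t) := by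
    rw [← hsum] at hgrowth
    simpa using hgrowth.sub hg_growth
  obtain rfl : P = 0 :=
    eq_zero_of_expPoly_isLittleO_exp ((isLittleO_congr_of_sub_mem_vanishing hP).1 hh_growth)
  have hh_mem : h ∈ vanishing := by simpa [expPoly_zero] using hP
  rw [← hsum, map_add]
  exact add_mem hg_op (diffOp_mem_vanishing _ hh_mem)

/-- The polynomial `X² - r²` representing the Laplacian on the half-space after the Fourier
transform in the tangential variables at a frequency of length `r`; `X` stands for the normal
derivative. -/
def laplacianSymbol (r : ℝ) : ℂ[X] := X ^ 2 - C ((r : ℂ) ^ 2)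

theorem laplacianSymbol_eq (r : ℝ) : laplacianSymbol r = (X - C (r : ℂ)) * (X - C (-r : ℂ)) := by
  simp only [laplacianSymbol, map_pow, map_neg]
  ring

theorem diffOp_laplacianSymbol_sq_apply (r : ℝ) (f : SmoothFunction) (t : ℝ) :
    diffOp (laplacianSymbol r ^ 2) f t
      = iteratedDeriv 4 f t - 2 * (r : ℂ) ^ 2 * iteratedDeriv 2 f t + (r : ℂ) ^ 4 * f t := by
  have hexpand : laplacianSymbol r ^ 2
      = X ^ 4 - C (2 * (r : ℂ) ^ 2) * X ^ 2 + C ((r : ℂ) ^ 4) := by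
    simp only [laplacianSymbol, map_pow, map_mul, map_ofNat]
    ring
  simp only [hexpand, map_add, map_sub, LinearMap.add_apply, LinearMap.sub_apply,
    diffOp_mul_apply (C _), diffOp_C_apply, Submodule.coe_add, Submodule.coe_sub,
    Submodule.coe_smul, coe_diffOp_X_pow, Pi.add_apply, Pi.sub_apply, Pi.smul_apply, smul_eq_mul]

theorem diffOp_X_sub_C_neg_pow_mem_vanishing {r : ℝ} (hr : 0 < r) {n : ℕ} {f : SmoothFunction}
    (hf : diffOp (laplacianSymbol r ^ n) f ∈ vanishing)
    (hgrowth : f =o[atTop] fun t => Real.exp (r * t)) :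
    diffOp ((X - C (-r : ℂ)) ^ n) f ∈ vanishing := by
  rw [laplacianSymbol_eq, mul_pow] at hf
  refine diffOp_mem_vanishing_of_isLittleO_exp ?_ hf hgrowth
  simpa using by linarith

theorem mem_vanishing_of_laplacianSymbol_sq {r : ℝ} (hr : 0 < r) {f : SmoothFunction}
    (hf : diffOp (laplacianSymbol r ^ 2) f ∈ vanishing)
    (hgrowth : f =o[atTop] fun t => Real.exp (r * t))
    (h0 : f 0 = 0) (h2 : diffOp (X ^ 2) f 0 = 0) : f ∈ vanishing := by
  have hop := diffOp_X_sub_C_neg_pow_mem_vanishing hr hf hgrowth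
  have h1 : diffOp X f 0 = 0 := by
    have hexpand : (X - C (-r : ℂ)) ^ 2 = X ^ 2 + C (2 * r : ℂ) * X + C ((r : ℂ) ^ 2) := by
      simp only [map_neg, map_mul, map_pow, map_ofNat]
      ring
    have hboundary := hop 0 le_rfl
    simp only [hexpand, map_add, LinearMap.add_apply, diffOp_mul_apply, diffOp_C_apply,
      Submodule.coe_add, Submodule.coe_smul, Pi.add_apply, Pi.smul_apply, h0, h2] at hboundary
    simpa [hr.ne'] using hboundary
  refine mem_vanishing_of_diffOp_mem (pow_ne_zero _ (X_sub_C_ne_zero _)) hop fun j hj => ?_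
  rw [natDegree_pow, natDegree_X_sub_C] at hj
  interval_cases j
  · simpa using h0
  · simpa using h1

theorem mem_vanishing_of_laplacianSymbol_cube {r : ℝ} (hr : 0 < r) {f : SmoothFunction}
    (hf : diffOp (laplacianSymbol r ^ 3) f ∈ vanishing)
    (hgrowth : f =o[atTop] fun t => Real.exp (r * t))
    (h0 : f 0 = 0) (h1 : diffOp X f 0 = 0) (h3 : diffOp (X ^ 3) f 0 = 0) : f ∈ vanishing := by
  have hop := diffOp_X_sub_C_neg_pow_mem_vanishing hr hf hgrowth
  have h2 : diffOp (X ^ 2) f 0 = 0 := by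
    have hexpand : (X - C (-r : ℂ)) ^ 3
        = X ^ 3 + C (3 * r : ℂ) * X ^ 2 + C (3 * (r : ℂ) ^ 2) * X + C ((r : ℂ) ^ 3) := by
      simp only [map_neg, map_mul, map_pow, map_ofNat]
      ring
    have hboundary := hop 0 le_rfl
    simp only [hexpand, map_add, LinearMap.add_apply, diffOp_mul_apply (C _), diffOp_C_apply,
      Submodule.coe_add, Submodule.coe_smul, Pi.add_apply, Pi.smul_apply, h0, h1, h3] at hboundary
    simpa [hr.ne'] using hboundary
  refine mem_vanishing_of_diffOp_mem (pow_ne_zero _ (X_sub_C_ne_zero _)) hop fun j hj => ?_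
  rw [natDegree_pow, natDegree_X_sub_C] at hj
  interval_cases j
  · simpa using h0
  · simpa using h1
  · exact h2

variable {ι : Type*} [Fintype ι]

/-- The system `Δ²u + ∇p = 0`, `∇·u = 0` in a half-space after the Fourier transform in the
tangential variables at frequency `η`: `v` collects the tangential components of `u` and `w` is
the normal one. -/
structure IsStokesMode (η : EuclideanSpace ℝ ι) (v : ι → SmoothFunction) (w p : SmoothFunction) :
    Prop where
  tangential (j : ι) :
    diffOp (laplacianSymbol ‖η‖ ^ 2) (v j) + (Complex.I * η j) • p ∈ vanishing
  normal : diffOp (laplacianSymbol ‖η‖ ^ 2) w + diffOp X p ∈ vanishing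
  divergence : diffOp X w + ∑ j, (Complex.I * η j) • v j ∈ vanishing

namespace IsStokesMode

variable {η : EuclideanSpace ℝ ι} {v : ι → SmoothFunction} {w p : SmoothFunction}

theorem laplacian_pressure (h : IsStokesMode η v w p) :
    diffOp (laplacianSymbol ‖η‖) p ∈ vanishing := by
  have hmomentum : diffOp X (diffOp (laplacianSymbol ‖η‖ ^ 2) w + diffOp X p)
      + ∑ j, (Complex.I * η j) •
        (diffOp (laplacianSymbol ‖η‖ ^ 2) (v j) + (Complex.I * η j) • p) ∈ vanishing :=
    add_mem (diffOp_mem_vanishing X h.normal)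
      (sum_mem fun j _ => vanishing.smul_mem _ (h.tangential j))
  have hnorm : ∑ j, (Complex.I * η j) ^ 2 = -(‖η‖ : ℂ) ^ 2 := by
    simp only [mul_pow, Complex.I_sq, neg_one_mul, Finset.sum_neg_distrib]
    exact_mod_cast congrArg Neg.neg (EuclideanSpace.real_norm_sq_eq η).symm
  convert sub_mem hmomentum (diffOp_mem_vanishing (laplacianSymbol ‖η‖ ^ 2) h.divergence) using 1
  have hpressure : diffOp (laplacianSymbol ‖η‖) p
      = diffOp X (diffOp X p) + (∑ j, (Complex.I * η j) ^ 2) • p := by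
    rw [hnorm, laplacianSymbol, map_sub, LinearMap.sub_apply, diffOp_C_apply, sq X,
      diffOp_mul_apply]
    module
  have hcomm : diffOp X (diffOp (laplacianSymbol ‖η‖ ^ 2) w)
      = diffOp (laplacianSymbol ‖η‖ ^ 2) (diffOp X w) := by
    rw [← diffOp_mul_apply, mul_comm, diffOp_mul_apply]
  simp only [hpressure, hcomm, map_add, map_sum, map_smul, smul_add, smul_smul, ← sq,
    Finset.sum_add_distrib, ← Finset.sum_smul]
  abel

theorem laplacian_cube_normal (h : IsStokesMode η v w p) :
    diffOp (laplacianSymbol ‖η‖ ^ 3) w ∈ vanishing := by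
  convert sub_mem (diffOp_mem_vanishing (laplacianSymbol ‖η‖) h.normal)
    (diffOp_mem_vanishing X h.laplacian_pressure) using 1
  rw [map_add, ← diffOp_mul_apply, ← diffOp_mul_apply, ← diffOp_mul_apply, mul_comm X,
    add_sub_cancel_right, ← pow_succ']

theorem normal_boundary_eq_zero (h : IsStokesMode η v w p) {n : ℕ}
    (hv : ∀ j, diffOp (X ^ n) (v j) 0 = 0) : diffOp (X ^ (n + 1)) w 0 = 0 := by
  have hdiv := diffOp_mem_vanishing (X ^ n) h.divergence 0 le_rfl
  rw [map_add, ← diffOp_mul_apply, ← pow_succ] at hdiv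
  simpa [hv, -map_pow] using hdiv

theorem mem_vanishing (h : IsStokesMode η v w p) (hη : η ≠ 0)
    (hv0 : ∀ j, v j 0 = 0) (hw0 : w 0 = 0)
    (hv2 : ∀ j, diffOp (X ^ 2) (v j) 0 = Complex.I * η j * diffOp X w 0)
    (hv : ∀ j, v j =o[atTop] fun t => Real.exp (‖η‖ * t))
    (hw : w =o[atTop] fun t => Real.exp (‖η‖ * t)) :
    (∀ j, v j ∈ vanishing) ∧ w ∈ vanishing ∧ p ∈ vanishing := by
  have hr : 0 < ‖η‖ := norm_pos_iff.2 hη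
  have hw1 : diffOp X w 0 = 0 := by
    simpa using h.normal_boundary_eq_zero (n := 0) (by simpa using hv0)
  simp only [hw1, mul_zero] at hv2
  have hwmem : w ∈ vanishing := mem_vanishing_of_laplacianSymbol_cube hr h.laplacian_cube_normal hw
    hw0 hw1 (h.normal_boundary_eq_zero hv2)
  have hpmem : p ∈ vanishing := by
    have hp' : diffOp X p ∈ vanishing :=
      (vanishing.add_mem_iff_right (diffOp_mem_vanishing _ hwmem)).1 h.normal
    have hp := h.laplacian_pressure
    rw [laplacianSymbol, map_sub, LinearMap.sub_apply, diffOp_C_apply, sq X, diffOp_mul_apply,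
      vanishing.sub_mem_iff_right (diffOp_mem_vanishing X hp')] at hp
    exact (vanishing.smul_mem_iff (by simpa using hη)).1 hp
  refine ⟨fun j => ?_, hwmem, hpmem⟩
  exact mem_vanishing_of_laplacianSymbol_sq hr
    ((vanishing.add_mem_iff_left (vanishing.smul_mem _ hpmem)).1 (h.tangential j)) (hv j)
    (hv0 j) (hv2 j)

end IsStokesMode

end SmoothFunction

end

open Asymptotics SmoothFunction in
theorem stmt18_general (η : EuclideanSpace ℝ (Fin 2)) (hη : η ≠ 0) (γ : ℂ)
    (u : ℝ → Fin 3 → ℂ) (p : ℝ → ℂ)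
    (hu : ∀ i : Fin 3, ContDiff ℝ (⊤ : ℕ∞) (fun t => u t i))
    (hp : ContDiff ℝ (⊤ : ℕ∞) p)
    (heq0 : ∀ t : ℝ, 0 < t →
      iteratedDeriv 4 (fun s => u s 0) t
        - 2 * (‖η‖ : ℂ)^2 * iteratedDeriv 2 (fun s => u s 0) t
        + (‖η‖ : ℂ)^4 * u t 0 + Complex.I * (η 0 : ℂ) * p t = 0)
    (heq1 : ∀ t : ℝ, 0 < t →
      iteratedDeriv 4 (fun s => u s 1) t
        - 2 * (‖η‖ : ℂ)^2 * iteratedDeriv 2 (fun s => u s 1) t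
        + (‖η‖ : ℂ)^4 * u t 1 + Complex.I * (η 1 : ℂ) * p t = 0)
    (heq2 : ∀ t : ℝ, 0 < t →
      iteratedDeriv 4 (fun s => u s 2) t
        - 2 * (‖η‖ : ℂ)^2 * iteratedDeriv 2 (fun s => u s 2) t
        + (‖η‖ : ℂ)^4 * u t 2 + deriv p t = 0)
    (hdiv : ∀ t : ℝ, 0 < t →
      deriv (fun s => u s 2) t
        + Complex.I * (η 0 : ℂ) * u t 0 + Complex.I * (η 1 : ℂ) * u t 1 = 0)
    (hbc0 : u 0 0 = 0) (hbc1 : u 0 1 = 0) (hbc2 : u 0 2 = 0)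
    (hwe1 : iteratedDeriv 2 (fun s => u s 1) 0
        - Complex.I * (η 1 : ℂ) * deriv (fun s => u s 2) 0
        + γ * (η 0 : ℂ) * ((η 1 : ℂ) * u 0 0 - (η 0 : ℂ) * u 0 1) = 0)
    (hwe2 : iteratedDeriv 2 (fun s => u s 0) 0
        - Complex.I * (η 0 : ℂ) * deriv (fun s => u s 2) 0
        + γ * (η 1 : ℂ) * ((η 1 : ℂ) * u 0 0 - (η 0 : ℂ) * u 0 1) = 0)
    (hgrowth : ∀ i : Fin 3, (fun t => u t i) =o[atTop] fun t => Real.exp (‖η‖ * t)) :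
    ∀ t : ℝ, 0 ≤ t → (∀ i : Fin 3, u t i = 0) ∧ p t = 0 := by
  let U (i : Fin 3) : SmoothFunction := ⟨fun t => u t i, hu i⟩
  let P : SmoothFunction := ⟨p, hp⟩
  have hmode : IsStokesMode η (fun j : Fin 2 => U j.castSucc) (U 2) P := by
    refine ⟨fun j => mem_vanishing_of_pos fun t ht => ?_, mem_vanishing_of_pos fun t ht => ?_,
      mem_vanishing_of_pos fun t ht => ?_⟩
    · fin_cases j
      · simpa [U, P, -map_pow, diffOp_laplacianSymbol_sq_apply] using heq0 t ht
      · simpa [U, P, -map_pow, diffOp_laplacianSymbol_sq_apply] using heq1 t ht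
    · simpa [U, P, -map_pow, diffOp_laplacianSymbol_sq_apply, coe_diffOp_X] using heq2 t ht
    · simpa [coe_diffOp_X, Fin.sum_univ_two, add_assoc] using hdiv t ht
  obtain ⟨hv, hw, hp0⟩ := hmode.mem_vanishing hη
    (Fin.forall_fin_two.2 ⟨hbc0, hbc1⟩) hbc2
    (Fin.forall_fin_two.2 ⟨
      by simpa [U, -map_pow, coe_diffOp_X, coe_diffOp_X_pow, hbc0, hbc1, sub_eq_zero] using hwe2,
      by simpa [U, -map_pow, coe_diffOp_X, coe_diffOp_X_pow, hbc0, hbc1, sub_eq_zero] using hwe1⟩)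
    (fun j => hgrowth j.castSucc) (hgrowth 2)
  exact fun t ht => ⟨Fin.lastCases (hw t ht) fun j => hv j t ht, hp0 t ht⟩

/-- The Lopatinskii–Shapiro covering condition for the Dirichlet–wall-eddy problem:
let `η ∈ ℝ²` be nonzero, `r = |η|`, `γ ∈ ℝ`, and suppose `u : ℝ → ℂ³`, `p : ℝ → ℂ`
are infinitely differentiable and satisfy for all `t > 0`
`uⱼ'''' − 2r²uⱼ'' + r⁴uⱼ + iηⱼp = 0` (`j = 1,2`),
`u₃'''' − 2r²u₃'' + r⁴u₃ + p' = 0`, `u₃' + iη₁u₁ + iη₂u₂ = 0`,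
together with the boundary conditions `u(0) = 0`,
`u₂''(0) − iη₂u₃'(0) + γη₁(η₂u₁(0) − η₁u₂(0)) = 0`,
`u₁''(0) − iη₁u₃'(0) + γη₂(η₂u₁(0) − η₁u₂(0)) = 0`.
If `u(t) → 0` and `p(t) → 0` as `t → +∞`, then `u ≡ 0` and `p ≡ 0` on `[0,∞)`
(indices 0-based). -/
theorem stmt18 (η : EuclideanSpace ℝ (Fin 2)) (hη : η ≠ 0) (γ : ℝ)
    (u : ℝ → Fin 3 → ℂ) (p : ℝ → ℂ)
    (hu : ∀ i : Fin 3, ContDiff ℝ (⊤ : ℕ∞) (fun t => u t i))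
    (hp : ContDiff ℝ (⊤ : ℕ∞) p)
    (heq0 : ∀ t : ℝ, 0 < t →
      iteratedDeriv 4 (fun s => u s 0) t
        - 2 * (‖η‖ : ℂ)^2 * iteratedDeriv 2 (fun s => u s 0) t
        + (‖η‖ : ℂ)^4 * u t 0 + Complex.I * (η 0 : ℂ) * p t = 0)
    (heq1 : ∀ t : ℝ, 0 < t →
      iteratedDeriv 4 (fun s => u s 1) t
        - 2 * (‖η‖ : ℂ)^2 * iteratedDeriv 2 (fun s => u s 1) t
        + (‖η‖ : ℂ)^4 * u t 1 + Complex.I * (η 1 : ℂ) * p t = 0)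
    (heq2 : ∀ t : ℝ, 0 < t →
      iteratedDeriv 4 (fun s => u s 2) t
        - 2 * (‖η‖ : ℂ)^2 * iteratedDeriv 2 (fun s => u s 2) t
        + (‖η‖ : ℂ)^4 * u t 2 + deriv p t = 0)
    (hdiv : ∀ t : ℝ, 0 < t →
      deriv (fun s => u s 2) t
        + Complex.I * (η 0 : ℂ) * u t 0 + Complex.I * (η 1 : ℂ) * u t 1 = 0)
    (hbc0 : u 0 0 = 0) (hbc1 : u 0 1 = 0) (hbc2 : u 0 2 = 0)
    (hwe1 : iteratedDeriv 2 (fun s => u s 1) 0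
        - Complex.I * (η 1 : ℂ) * deriv (fun s => u s 2) 0
        + (γ : ℂ) * (η 0 : ℂ) * ((η 1 : ℂ) * u 0 0 - (η 0 : ℂ) * u 0 1) = 0)
    (hwe2 : iteratedDeriv 2 (fun s => u s 0) 0
        - Complex.I * (η 0 : ℂ) * deriv (fun s => u s 2) 0
        + (γ : ℂ) * (η 1 : ℂ) * ((η 1 : ℂ) * u 0 0 - (η 0 : ℂ) * u 0 1) = 0)
    (hudecay : ∀ i : Fin 3, Tendsto (fun t => u t i) atTop (nhds 0))
    (hpdecay : Tendsto p atTop (nhds 0)) :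
    ∀ t : ℝ, 0 ≤ t → (∀ i : Fin 3, u t i = 0) ∧ p t = 0 := by
  exact stmt18_general η hη γ u p hu hp heq0 heq1 heq2 hdiv hbc0 hbc1 hbc2 hwe1 hwe2 fun i =>
    isLittleO_exp_const_mul_of_tendsto (hudecay i) (norm_pos_iff.2 hη)
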